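/- If α is a simple zero of f and Ω = (1/2){f,x} is bounded and C¹ near α, then the Schwarzian-Newton iteration function g(x) = x - arctan(Ω(x), h(x)) (where h = Φ/Φ') satisfies g(α) = α, g'(α) = g''(α) = g'''(α) = 0 and g⁽⁴⁾(α) = 2Ω'(α); hence the method has convergence order four with error relation ε_{n+1} = (Ω'(α)/12)ε_n⁴ + O(ε_n⁵). -/

import Mathlib

/-- The Schwarzian derivative `{f,x} = f'''/f' - (3/2)(f''/f')²`. -/
noncomputable def schwarzian (f : ℝ → ℝ) (x : ℝ) : ℝ :=
  deriv (deriv (deriv f)) x / deriv f x - (3/2) * (deriv (deriv f) x / deriv f x) ^ 2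

/-- The inverse hyperbolic tangent. -/
noncomputable def artanh (x : ℝ) : ℝ := (1/2) * Real.log ((1 + x) / (1 - x))

/-- The generalized arctangent: `arctan(λ,y) = arctan(√λ y)/√λ` for `λ > 0`, `y` for
`λ = 0`, and `arctanh(√(-λ) y)/√(-λ)` for `λ < 0`. -/
noncomputable def arctanGen (lam y : ℝ) : ℝ :=
  if 0 < lam then Real.arctan (Real.sqrt lam * y) / Real.sqrt lam
  else if lam < 0 then artanh (Real.sqrt (-lam) * y) / Real.sqrt (-lam)
  else y

/-- The analytic function with `s * A (s^2) = arctan s`. -/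
noncomputable def Aser : ℝ → ℝ :=
  (FormalMultilinearSeries.ofScalars ℝ (fun n : ℕ => (-1 : ℝ) ^ n / (2 * n + 1))).sum

theorem Aser_radius : 1 ≤ (FormalMultilinearSeries.ofScalars ℝ
    (fun n : ℕ => (-1 : ℝ) ^ n / (2 * n + 1))).radius := by
  have := FormalMultilinearSeries.le_radius_of_bound (FormalMultilinearSeries.ofScalars ℝ
    (fun n : ℕ => (-1 : ℝ) ^ n / (2 * n + 1))) 1 (r := 1) (by
      intro n
      rw [FormalMultilinearSeries.ofScalars_norm]
      simp only [norm_div, norm_pow, norm_neg, norm_one, one_pow, NNReal.coe_one, mul_one]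
      rw [Real.norm_of_nonneg (by positivity)]
      apply div_le_one_of_le₀ _ (by positivity)
      have : (0:ℝ) ≤ n := by positivity
      linarith)
  simpa using this

theorem Aser_ball : HasFPowerSeriesOnBall Aser (FormalMultilinearSeries.ofScalars ℝ
    (fun n : ℕ => (-1 : ℝ) ^ n / (2 * n + 1))) 0 1 :=
  (FormalMultilinearSeries.hasFPowerSeriesOnBall _
    (lt_of_lt_of_le one_pos Aser_radius)).mono one_pos Aser_radius

theorem mem_eball_one {t : ℝ} (ht : |t| < 1) : t ∈ Metric.eball (0:ℝ) 1 := by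
  rw [← ENNReal.ofReal_one, Metric.eball_ofReal]
  simpa using ht

theorem Aser_analyticAt {t : ℝ} (ht : |t| < 1) : AnalyticAt ℝ Aser t :=
  Aser_ball.analyticAt_of_mem (mem_eball_one ht)

theorem Aser_hasSum {t : ℝ} (ht : |t| < 1) :
    HasSum (fun n : ℕ => (-1 : ℝ) ^ n / (2 * n + 1) * t ^ n) (Aser t) := by
  have := Aser_ball.hasSum (mem_eball_one ht)
  simpa [FormalMultilinearSeries.ofScalars_apply_eq, mul_comm] using this

theorem Aser_arctan {s : ℝ} (hs : |s| < 1) : s * Aser (s ^ 2) = Real.arctan s := by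
  have h2 : |s ^ 2| < 1 := by rw [abs_pow]; exact pow_lt_one₀ (abs_nonneg _) hs two_ne_zero
  refine ((Aser_hasSum h2).mul_left s).unique ?_
  convert! Real.hasSum_arctan (x := s) hs using 2 with n
  push_cast
  ring

theorem Aser_artanh {s : ℝ} (hs : |s| < 1) : s * Aser (-s ^ 2) = artanh s := by
  have h2 : |-s ^ 2| < 1 := by
    rw [abs_neg, abs_pow]; exact pow_lt_one₀ (abs_nonneg _) hs two_ne_zero
  refine ((Aser_hasSum h2).mul_left s).unique ?_
  have h3 := abs_lt.1 hs
  unfold artanh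
  rw [Real.log_div (by linarith) (by linarith)]
  convert! (Real.hasSum_log_sub_log_of_abs_lt_one hs).mul_left (1/2) using 2 with n
  have : (-s^2)^n = (-1)^n * (s^2)^n := by rw [← mul_pow]; ring
  rw [this, ← pow_mul, pow_succ]
  have : (-1:ℝ)^n * (-1)^n = 1 := by rw [← mul_pow]; norm_num
  linear_combination (s * s ^ (2*n) / (2 * n + 1)) * this

theorem arctanGen_eq {l y : ℝ} (ht : |l * y ^ 2| < 1) :
    arctanGen l y = y * Aser (l * y ^ 2) := by
  unfold arctanGen
  split_ifs with h1 h2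
  · have hs : Real.sqrt l ≠ 0 := (Real.sqrt_pos.2 h1).ne'
    have e : (Real.sqrt l * y) ^ 2 = l * y ^ 2 := by rw [mul_pow, Real.sq_sqrt h1.le]
    rw [← Aser_arctan (by rw [← e, abs_pow] at ht; exact (pow_lt_one_iff_of_nonneg (abs_nonneg _) two_ne_zero).1 ht), e]
    field_simp
  · have hs : Real.sqrt (-l) ≠ 0 := (Real.sqrt_pos.2 (by linarith)).ne'
    have e : -(Real.sqrt (-l) * y) ^ 2 = l * y ^ 2 := by
      rw [mul_pow, Real.sq_sqrt (by linarith)]; ring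
    rw [← Aser_artanh (by rw [← e, abs_neg, abs_pow] at ht; exact (pow_lt_one_iff_of_nonneg (abs_nonneg _) two_ne_zero).1 ht), e]
    field_simp
  · have : l = 0 := by linarith
    subst this
    have h0 := (Aser_hasSum (t := 0) (by simp)).unique (hasSum_single 0 (by
      intro n hn; simp [hn]))
    simp [h0]

theorem Aser_ode {t : ℝ} (ht : |t| < 1) : Aser t + 2 * t * deriv Aser t = 1 / (1 + t) := by
  have key : ∀ (ε s : ℝ), |ε * s ^ 2| < 1 → HasDerivAt (fun s => s * Aser (ε * s ^ 2))
      (Aser (ε * s ^ 2) + 2 * (ε * s ^ 2) * deriv Aser (ε * s ^ 2)) s := by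
    intro ε s hs
    have h1 := (Aser_analyticAt hs).differentiableAt.hasDerivAt
    have h2 : HasDerivAt (fun s : ℝ => ε * s ^ 2) (ε * (2 * s)) s := by
      simpa using (hasDerivAt_pow 2 s).const_mul ε
    have h3 := (hasDerivAt_id s).mul (h1.comp s h2)
    convert! h3 using 1
    simp; ring
  have hev : ∀ s : ℝ, |s| < 1 → ∀ᶠ x in nhds s, |x| < 1 := fun s hs =>
    continuous_abs.continuousAt.eventually_lt_const hs
  rcases le_or_gt 0 t with h | h
  · have hs2 := Real.sq_sqrt h
    have hs : |Real.sqrt t| < 1 := by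
      rw [← hs2, abs_pow] at ht; exact (pow_lt_one_iff_of_nonneg (abs_nonneg _) two_ne_zero).1 ht
    have k := key 1 (Real.sqrt t) (by simpa [hs2] using ht)
    have k2 := (Real.hasDerivAt_arctan (Real.sqrt t)).congr_of_eventuallyEq
      (f₁ := fun s => s * Aser (1 * s ^ 2)) (by
        filter_upwards [hev _ hs] with x hx
        rw [one_mul, Aser_arctan hx])
    have := k.unique k2
    rwa [hs2, one_mul] at this
  · have hs2 := Real.sq_sqrt (x := -t) (by linarith)
    have hs : |Real.sqrt (-t)| < 1 := by
      rw [← abs_neg, ← hs2, abs_pow] at ht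
      exact (pow_lt_one_iff_of_nonneg (abs_nonneg _) two_ne_zero).1 ht
    have k := key (-1) (Real.sqrt (-t)) (by simpa [hs2] using ht)
    set s := Real.sqrt (-t)
    have h3 := abs_lt.1 hs
    have k1 : HasDerivAt artanh (1 / (1 + t)) s := by
      have a : HasDerivAt (fun x : ℝ => 1 + x) 1 s := by simpa using (hasDerivAt_id s).const_add 1
      have b : HasDerivAt (fun x : ℝ => 1 - x) (-1) s := by simpa using (hasDerivAt_id s).const_sub 1
      have p1 : 1 + s ≠ 0 := by linarith
      have p2 : 1 - s ≠ 0 := by linarith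
      have c := ((a.div b p2).log (div_ne_zero p1 p2)).const_mul (1/2)
      convert! c using 1
      have : t = - s^2 := by linarith
      have p3 : 1 + t ≠ 0 := by
        rw [this]; intro hc; apply mul_ne_zero p1 p2; linear_combination hc
      rw [this] at p3 ⊢
      simp only [Pi.div_apply]
      field_simp
      ring
    have k2 := k1.congr_of_eventuallyEq
      (f₁ := fun s => s * Aser (-1 * s ^ 2)) (by
        filter_upwards [hev _ hs] with x hx
        rw [← Aser_artanh hx]; simp)
    have := k.unique k2
    rwa [hs2, neg_one_mul, neg_neg] at this

theorem Aser_deriv_zero : deriv Aser 0 = -1/3 := by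
  have a0 : AnalyticAt ℝ Aser 0 := Aser_analyticAt (by simp)
  have h1 := a0.differentiableAt.hasDerivAt
  have h2 := a0.deriv.differentiableAt.hasDerivAt
  have h3 := h1.add (((hasDerivAt_id (0:ℝ)).const_mul 2).mul h2)
  have h4 : HasDerivAt (fun t : ℝ => 1 / (1 + t)) (-1) 0 := by
    have := ((hasDerivAt_id (0:ℝ)).const_add 1).inv (by simp)
    convert! this using 1
    · ext t; simp
    · simp
  have h5 := h4.congr_of_eventuallyEq
    (f₁ := Aser + (fun t => 2 * id t) * deriv Aser) (by
    filter_upwards [continuous_abs.continuousAt.eventually_lt_const (show |(0:ℝ)| < 1 by simp)] with t ht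
    simpa using Aser_ode ht)
  have := h3.unique h5
  simp at this
  linarith

theorem ContDiffAt.ev_diff {u : ℝ → ℝ} {a : ℝ} (hu : ContDiffAt ℝ (⊤ : ℕ∞) u a) :
    ∀ᶠ x in nhds a, DifferentiableAt ℝ u x := by
  have h1 : ContDiffAt ℝ 1 u a := hu.of_le (by exact_mod_cast le_top)
  filter_upwards [h1.eventually (by simp)] with x hx
  exact hx.differentiableAt (by simp)

theorem ContDiffAt.smooth_deriv {u : ℝ → ℝ} {a : ℝ} (hu : ContDiffAt ℝ (⊤ : ℕ∞) u a) :
    ContDiffAt ℝ (⊤ : ℕ∞) (deriv u) a := ContDiffAt.derivWithin hu (by simp)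

theorem step {u h K : ℝ → ℝ} {a : ℝ} (n : ℕ) (hh : ContDiffAt ℝ (⊤ : ℕ∞) h a)
    (hK : ContDiffAt ℝ (⊤ : ℕ∞) K a) (hu : u =ᶠ[nhds a] fun x => h x ^ (n+1) * K x) (h0 : h a = 0) :
    ∃ L : ℝ → ℝ, ContDiffAt ℝ (⊤ : ℕ∞) L a ∧ L a = (n+1) * deriv h a * K a ∧
      deriv u =ᶠ[nhds a] fun x => h x ^ n * L x := by
  refine ⟨fun x => (n+1) * deriv h x * K x + h x * deriv K x, ?_, by simp [h0], ?_⟩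
  · exact ((contDiffAt_const.mul hh.smooth_deriv).mul hK).add (hh.mul hK.smooth_deriv)
  · filter_upwards [hu.eventuallyEq_nhds, hh.ev_diff, hK.ev_diff] with x h1 h2 h3
    rw [h1.deriv_eq]
    have := (h2.hasDerivAt.pow (n+1)).mul h3.hasDerivAt
    refine this.deriv.trans ?_
    simp
    ring

/-- If `α` is a simple zero of a smooth `f` and `Ω = (1/2){f,x}` is `C¹` near `α`, then the
Schwarzian-Newton iteration function `g(x) = x - arctan(Ω(x), h(x))`, with
`h = f/(f' - f''f/(2f'))`, satisfies `g(α) = α`, `g'(α) = g''(α) = g'''(α) = 0`,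
`g⁽⁴⁾(α) = 2Ω'(α)`; hence the method is of order four with error relation
`ε_{n+1} = (Ω'(α)/12) ε_n⁴ + O(ε_n⁵)`. -/
theorem stmt8 (f : ℝ → ℝ) (hf : ContDiff ℝ (⊤ : ℕ∞) f)
    (α : ℝ) (hfα : f α = 0) (hf' : deriv f α ≠ 0)
    (Ω : ℝ → ℝ) (hΩdef : ∀ x, Ω x = (1/2) * schwarzian f x)
    (hΩ : ContDiffAt ℝ 1 Ω α)
    (h g : ℝ → ℝ)
    (hh : ∀ x, h x = f x / (deriv f x - deriv (deriv f) x * f x / (2 * deriv f x)))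
    (hg : ∀ x, g x = x - arctanGen (Ω x) (h x)) :
    g α = α ∧ deriv g α = 0 ∧ deriv (deriv g) α = 0 ∧ deriv (deriv (deriv g)) α = 0 ∧
    deriv (deriv (deriv (deriv g))) α = 2 * deriv Ω α ∧
    Filter.Tendsto (fun x => (g x - α) / (x - α) ^ 4) (nhdsWithin α {α}ᶜ)
      (nhds (deriv Ω α / 12)) := by
  have sf : ContDiff ℝ (⊤ : ℕ∞) f := hf
  have sf1 := (contDiff_infty_iff_deriv.1 sf).2
  have sf2 := (contDiff_infty_iff_deriv.1 sf1).2
  have sf3 := (contDiff_infty_iff_deriv.1 sf2).2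
  have eΩ : Ω = fun x => (1/2) * (deriv (deriv (deriv f)) x / deriv f x
      - (3/2) * (deriv (deriv f) x / deriv f x) ^ 2) := funext hΩdef
  have eh : h = fun x => f x / (deriv f x - deriv (deriv f) x * f x / (2 * deriv f x)) := funext hh
  have sΩ : ContDiffAt ℝ (⊤ : ℕ∞) Ω α := by
    rw [eΩ]
    exact contDiffAt_const.mul ((sf3.contDiffAt.div sf1.contDiffAt hf').sub
      (contDiffAt_const.mul ((sf2.contDiffAt.div sf1.contDiffAt hf').pow 2)))
  have sD : ContDiffAt ℝ (⊤ : ℕ∞)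
      (fun x => deriv f x - deriv (deriv f) x * f x / (2 * deriv f x)) α :=
    sf1.contDiffAt.sub ((sf2.contDiffAt.mul sf.contDiffAt).div
      (contDiffAt_const.mul sf1.contDiffAt) (mul_ne_zero two_ne_zero hf'))
  have hDα : deriv f α - deriv (deriv f) α * f α / (2 * deriv f α) ≠ 0 := by simpa [hfα] using hf'
  have sh : ContDiffAt ℝ (⊤ : ℕ∞) h α := by
    rw [eh]; exact sf.contDiffAt.div sD hDα
  have h0 : h α = 0 := by simp [hh, hfα]
  have hder : ∀ᶠ x in nhds α, deriv h x = 1 + Ω x * h x ^ 2 := by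
    filter_upwards [sf1.continuous.continuousAt.eventually_ne hf',
      sD.continuousAt.eventually_ne hDα] with x h1 h2
    have d0 := (sf.differentiable (by simp) x).hasDerivAt
    have d1 := (sf1.differentiable (by simp) x).hasDerivAt
    have d2 := (sf2.differentiable (by simp) x).hasDerivAt
    have dd := d0.div (d1.sub ((d2.mul d0).div (d1.const_mul 2) (mul_ne_zero two_ne_zero h1))) h2
    have e := dd.deriv
    rw [hh x, hΩdef x, schwarzian, eh]
    refine e.trans ?_
    simp only [Pi.sub_apply, Pi.div_apply, Pi.mul_apply]
    generalize deriv (deriv (deriv f)) x = f3 at *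
    generalize deriv (deriv f) x = f2 at *
    generalize deriv f x = f1 at *
    generalize f x = f0 at *
    have h3 : 2 * f1 ^ 2 - f2 * f0 ≠ 0 := by
      intro hc; apply h2; field_simp; linear_combination hc
    have e1 : f1 - f2 * f0 / (2 * f1) = (2 * f1 ^ 2 - f2 * f0) / (2 * f1) := by field_simp
    rw [e1]
    clear e1
    obtain ⟨W, hW⟩ : ∃ W, W = 2 * f1 ^ 2 - f2 * f0 := ⟨_, rfl⟩
    rw [← hW] at h3 ⊢
    field_simp
    rw [hW]
    ring
  have hh1 : deriv h α = 1 := by simpa [h0] using hder.self_of_nhds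
  have st : ContDiffAt ℝ (⊤ : ℕ∞) (fun x => Ω x * h x ^ 2) α := sΩ.mul (sh.pow 2)
  have t0 : Ω α * h α ^ 2 = 0 := by simp [h0]
  have evt : ∀ᶠ x in nhds α, |Ω x * h x ^ 2| < 1 :=
    st.continuousAt.abs.eventually_lt_const (by simp [h0])
  have eg : g =ᶠ[nhds α] fun x => x - h x * Aser (Ω x * h x ^ 2) := by
    filter_upwards [evt] with x hx
    rw [hg, arctanGen_eq hx]
  have gα : g α = α := by rw [eg.self_of_nhds]; simp [h0]
  obtain ⟨K, hKdef⟩ : ∃ K : ℝ → ℝ, K = fun x => -(deriv Ω x * deriv Aser (Ω x * h x ^ 2)) :=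
    ⟨_, rfl⟩
  have sK : ContDiffAt ℝ (⊤ : ℕ∞) K α := by
    rw [hKdef]
    have a : ContDiffAt ℝ (⊤ : ℕ∞) (deriv Aser) (Ω α * h α ^ 2) :=
      (Aser_analyticAt (by simp [h0])).deriv.contDiffAt
    exact (sΩ.smooth_deriv.mul (a.comp α st)).neg
  have K0 : K α = deriv Ω α / 3 := by
    rw [hKdef]; simp only [t0, Aser_deriv_zero]; ring
  have dg : ∀ᶠ x in nhds α, HasDerivAt g (h x ^ (2+1) * K x) x := by
    filter_upwards [evt, eg.eventuallyEq_nhds, hder, sh.ev_diff, sΩ.ev_diff] with x h1 h2 h3 h4 h5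
    refine HasDerivAt.congr_of_eventuallyEq ?_ h2
    have a := (Aser_analyticAt h1).differentiableAt.hasDerivAt
    have b := h5.hasDerivAt.mul (h4.hasDerivAt.pow 2)
    have c := (hasDerivAt_id x).sub (h4.hasDerivAt.mul (a.comp x b))
    convert! c using 1
    have ode := Aser_ode h1
    have hp : 1 + Ω x * h x ^ 2 ≠ 0 := by have := (abs_lt.1 h1).1; linarith
    rw [eq_div_iff hp] at ode
    rw [hKdef]
    simp only [Function.comp_apply, Pi.mul_apply, Pi.pow_apply, h3]
    push_cast
    linear_combination ode
  have e1 : deriv g =ᶠ[nhds α] fun x => h x ^ (2+1) * K x := dg.mono fun x hx => hx.deriv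
  obtain ⟨L2, s2, v2, e2⟩ := step 2 sh sK e1 h0
  obtain ⟨L3, s3, v3, e3⟩ := step 1 sh s2 e2 h0
  obtain ⟨L4, s4, v4, e4⟩ := step 0 sh s3 e3 h0
  refine ⟨gα, ?_, ?_, ?_, ?_, ?_⟩
  · rw [e1.self_of_nhds]; simp [h0]
  · rw [e2.self_of_nhds]; simp [h0]
  · rw [e3.self_of_nhds]; simp [h0]
  · rw [e4.self_of_nhds]; simp only [v4, v3, v2, K0, hh1]; push_cast; ring
  · refine HasDerivAt.lhopital_zero_nhdsNE (f' := fun x => h x ^ (2+1) * K x)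
      (g' := fun x => 4 * (x - α) ^ 3) ?_ ?_ ?_ ?_ ?_ ?_
    · exact (dg.mono fun x hx => hx.sub_const α).filter_mono nhdsWithin_le_nhds
    · refine Filter.Eventually.of_forall fun x => ?_
      convert! ((hasDerivAt_id x).sub_const α).pow 4 using 1
      simp
    · filter_upwards [self_mem_nhdsWithin] with x hx
      exact mul_ne_zero (by norm_num) (pow_ne_zero _ (sub_ne_zero.2 hx))
    · have : ContinuousAt (fun x => g x - α) α :=
        (dg.self_of_nhds.sub_const α).continuousAt
      have t := this.tendsto
      simp only [gα, sub_self] at t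
      exact t.mono_left nhdsWithin_le_nhds
    · have : ContinuousAt (fun x : ℝ => (x - α) ^ 4) α := by fun_prop
      have t := this.tendsto
      simp only [sub_self] at t
      norm_num at t
      exact t.mono_left nhdsWithin_le_nhds
    · have sl := (sh.differentiableAt (by simp)).hasDerivAt.tendsto_slope
      rw [hh1] at sl
      have kk := sK.continuousAt.tendsto.mono_left (nhdsWithin_le_nhds (s := {α}ᶜ))
      have := ((sl.pow 3).mul kk).div_const 4
      rw [K0] at this
      convert! this.congr' ?_ using 2
      · ring
      · filter_upwards [self_mem_nhdsWithin] with x hx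
        have : x - α ≠ 0 := sub_ne_zero.2 hx
        rw [slope_def_field, h0]
        field_simp
        try ring
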